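/- For every positive integer n, there exists a finite graph G with a list assignment L in which every list has size three, such that every request for G and L with singleton domain is 1-satisfiable, yet G with L is not ε-flexible for any ε > 1/n. -/

import Mathlib

def IsLColoring {V : Type*} (G : SimpleGraph V) (L : V → Finset ℕ) (φ : V → ℕ) : Prop :=
  (∀ v, φ v ∈ L v) ∧ ∀ ⦃u w : V⦄, G.Adj u w → φ u ≠ φ w

def EpsSat {V : Type*} (G : SimpleGraph V) (L : V → Finset ℕ) (D : Finset V)
    (r : V → ℕ) (ε : ℝ) : Prop :=
  ∃ φ : V → ℕ, IsLColoring G L φ ∧ ε * D.card ≤ ((D.filter fun v => φ v = r v).card : ℝ)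

def Flexible {V : Type*} (G : SimpleGraph V) (L : V → Finset ℕ) (ε : ℝ) : Prop :=
  ∀ (D : Finset V) (r : V → ℕ), (∀ v ∈ D, r v ∈ L v) → EpsSat G L D r ε

theorem stmt9 (n : ℕ) (hn : 0 < n) :
    ∃ (m : ℕ) (G : SimpleGraph (Fin m)) (L : Fin m → Finset ℕ),
      (∀ v, (L v).card = 3) ∧
      (∀ u : Fin m, ∀ c ∈ L u, ∃ φ : Fin m → ℕ, IsLColoring G L φ ∧ φ u = c) ∧
      ∀ ε : ℝ, 1 / n < ε → ¬ Flexible G L ε := by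
  refine ⟨n, ⊤, fun i => {0, 2 * i.val + 1, 2 * i.val + 2}, ?_, ?_, ?_⟩
  · intro v
    rw [Finset.card_eq_three]
    exact ⟨_, _, _, by omega, by omega, by omega, rfl⟩
  · intro u c hc
    simp only [Finset.mem_insert, Finset.mem_singleton] at hc
    refine ⟨fun i => if i = u then c else 2 * i.val + 1, ⟨?_, ?_⟩, by simp⟩
    · intro v
      by_cases h : v = u
      · subst h
        simpa using hc
      · simp [h]
    · intro a b hab
      have hne : a.val ≠ b.val := fun h => hab.ne (Fin.ext h)
      by_cases h1 : a = u
      · have h2 : b ≠ u := fun h => hab.ne (h1.trans h.symm)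
        subst h1
        simp only [if_true, if_neg h2]
        omega
      · by_cases h2 : b = u
        · subst h2
          simp only [if_true, if_neg h1]
          omega
        · simp only [if_neg h1, if_neg h2]
          omega
  · intro ε hε hF
    obtain ⟨φ, ⟨-, hφ⟩, hc⟩ := hF Finset.univ (fun _ => 0) (by simp)
    have h1 : (Finset.univ.filter fun v => φ v = 0).card ≤ 1 := by
      rw [Finset.card_le_one]
      intro a ha b hb
      simp only [Finset.mem_filter, Finset.mem_univ, true_and] at ha hb
      by_contra hab
      exact hφ (show (⊤ : SimpleGraph (Fin n)).Adj a b from hab) (ha.trans hb.symm)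
    have h1' : ((Finset.univ.filter fun v => φ v = 0).card : ℝ) ≤ 1 := by exact_mod_cast h1
    have hn' : (0 : ℝ) < n := by exact_mod_cast hn
    rw [div_lt_iff₀ hn'] at hε
    simp only [Finset.card_univ, Fintype.card_fin] at hc
    linarith
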